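/- Fix integers n ≥ 1 and k ≥ 3. For every integer m ≥ 3 and every x ∈ Q_1^m(k), one has T_S(w_k)(x) ≥ (k / (2(2^n − 1))) · w_k(x). -/

import Mathlib

open MeasureTheory Set ENNReal

noncomputable section

/-- The half-open axis-parallel cube with corner `a` and side length `l`. -/
def Cube (n : ℕ) (a : Fin n → ℝ) (l : ℝ) : Set (Fin n → ℝ) :=
  Set.univ.pi fun i => Set.Ico (a i) (a i + l)

/-- The uncentered Hardy–Littlewood maximal function over axis-parallel cubes:
`Mg(x) = sup_{Q ∋ x} |Q|⁻¹ ∫_Q g`. -/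
def MaxFn {n : ℕ} (g : (Fin n → ℝ) → ℝ≥0∞) (x : Fin n → ℝ) : ℝ≥0∞ :=
  ⨆ (a : Fin n → ℝ) (l : ℝ) (_ : 0 < l) (_ : x ∈ Cube n a l),
    (volume (Cube n a l))⁻¹ * ∫⁻ y in Cube n a l, g y

/-- The cube of the sparse family `S` with parameters `k, N`:
`[0, 2^{-N})^n` for `k = 0` and `[2^k, 2^k + 2^{-N})^n` for `k ≥ 1`. -/
def sCube (n k N : ℕ) : Set (Fin n → ℝ) :=
  Cube n (fun _ => if k = 0 then 0 else (2:ℝ)^k) ((2:ℝ)^(-(N:ℤ)))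

/-- The sparse operator `T_S g = Σ_{Q ∈ S} (|Q|⁻¹ ∫_Q g) 1_Q`. -/
def TS {n : ℕ} (g : (Fin n → ℝ) → ℝ≥0∞) (x : Fin n → ℝ) : ℝ≥0∞ :=
  ∑' q : ℕ × ℕ,
    (sCube n q.1 q.2).indicator
      (fun _ => (volume (sCube n q.1 q.2))⁻¹ * ∫⁻ y in sCube n q.1 q.2, g y) x

/-- The `j`-th digit (for `j ≥ 1`) of `t ∈ [0,1)` in base `2^k`, using the expansion
which is not eventually constant `2^k - 1`. -/
def digit (k j : ℕ) (t : ℝ) : ℤ := ⌊t * 2^(k*j)⌋ % 2^k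

/-- `Ω_m(k) ⊆ [0,1)^n`: the points all of whose coordinates have base-`2^k` digits
in `{0, …, 2^{k-1}-1}` for `1 ≤ j ≤ m-1`, with `m`-th digit equal to `2^{k-1}`. -/
def Omega (n k m : ℕ) : Set (Fin n → ℝ) :=
  {x | (∀ i, x i ∈ Set.Ico (0:ℝ) 1) ∧
    ∀ i, (∀ j, 1 ≤ j → j < m → digit k j (x i) < 2^(k-1)) ∧
      digit k m (x i) = 2^(k-1)}

/-- The weight `w_k = Σ_{m ≥ 1} (2^{kn}/(2^{(k-1)n}+1))^m 1_{Ω_m(k)}`. -/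
def wk (n k : ℕ) : (Fin n → ℝ) → ℝ≥0∞ := fun x =>
  ∑' m : ℕ,
    (Omega n k (m+1)).indicator
      (fun _ => ((2:ℝ≥0∞)^(k*n) / ((2:ℝ≥0∞)^((k-1)*n) + 1))^(m+1)) x

/-- `Q_1^m(k) = [2^{-k(m-1)-1}, 2^{-k(m-1)-1} + 2^{-km})^n`. -/
def Q1 (n k m : ℕ) : Set (Fin n → ℝ) :=
  Cube n (fun _ => (2:ℝ)^(-(k*(m-1) : ℤ) - 1)) ((2:ℝ)^(-(k*m : ℤ)))

/-- `Γ(k) = ⋃_{m ≥ 3} Q_1^m(k)`. -/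
def Gamma (n k : ℕ) : Set (Fin n → ℝ) := ⋃ m : ℕ, Q1 n k (m+3)

/-- `A_k = 2^{(k-1)n} (2^{(k-1)n}+1)^2`. -/
def Ak (n k : ℕ) : ℝ≥0∞ := 2^((k-1)*n) * (2^((k-1)*n) + 1)^2

/-- The weight `w(x) = Σ_{k ≥ 3} A_k w_k(x - 2⃗^k) 1_{Γ(k)}(x - 2⃗^k)`. -/
def bigW (n : ℕ) : (Fin n → ℝ) → ℝ≥0∞ := fun x =>
  ∑' k : ℕ,
    (Gamma n (k+3)).indicator (fun z => Ak n (k+3) * wk n (k+3) z)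
      (fun i => x i - (2:ℝ)^(k+3))

/-- The test function `f(x) = Σ_{k ≥ 3} k^{-ε} A_k w_k(x - 2⃗^k)`. -/
def bigF (n : ℕ) (ε : ℝ) : (Fin n → ℝ) → ℝ≥0∞ := fun x =>
  ∑' k : ℕ,
    ((k+3 : ℝ≥0∞) ^ (-ε)) * Ak n (k+3) * wk n (k+3) (fun i => x i - (2:ℝ)^(k+3))

/-- `T` is bounded from `L^p(v)` to `L^p(u)` (for nonnegative functions, which are
required to be supported in `supp v`): there is a finite constant `C` with
`‖Tf‖_{L^p(u)} ≤ C ‖f‖_{L^p(v)}` for all `f ∈ L^p(v)`. -/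
def BddOn {n : ℕ} (T : ((Fin n → ℝ) → ℝ≥0∞) → (Fin n → ℝ) → ℝ≥0∞)
    (p : ℝ) (v u : (Fin n → ℝ) → ℝ≥0∞) : Prop :=
  ∃ C : ℝ≥0∞, C ≠ ∞ ∧ ∀ f : (Fin n → ℝ) → ℝ≥0∞, Measurable f →
    (∀ x, v x = 0 → f x = 0) → (∫⁻ x, f x ^ p * v x) < ∞ →
    ∫⁻ x, T f x ^ p * u x ≤ C ^ p * ∫⁻ x, f x ^ p * v x

/-- The dual weight `u^{1-p'} 1_{supp u}`. -/
def dualW {n : ℕ} (u : (Fin n → ℝ) → ℝ≥0∞) (q : ℝ) : (Fin n → ℝ) → ℝ≥0∞ :=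
  fun x => if u x = 0 then 0 else u x ^ (1 - q)

/-!
Prepending a base-`2^k` digit smaller than `2^{k-1}` to every coordinate of `y ∈ [0,1)^n` moves
`Ω_m` to `Ω_{m+1}`, hence multiplies `w_k(y)` by the ratio `r = 2^{kn} / (a + 1)`, where
`a = 2^{(k-1)n}`; prepending the digit `2^{k-1}` everywhere lands in `Ω_1`, where `w_k = r`. Since
each prepending contracts volume by `2^{-kn}`, the integral `I` of `w_k` over `[0,1)^n` satisfies
`2^{kn} I ≥ r (a I + 1)`, that is `(a + 1) I ≥ a I + 1`, so `I ≥ 1`. The same self-similarity shows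
that the average of `w_k` over `[0,2^{-N})^n` is `r^{M+1} I` whenever `kM < N ≤ k(M+1)`. A point of
`Q_1^m` lies in all `k` of these cubes for `M = m - 2`, so `T_S w_k ≥ k r^{m-1}` there, while
`w_k = r^m` and `r ≤ 2^n`.
-/

open scoped Pointwise

theorem setLAverage_smul {E : Type*} [NormedAddCommGroup E] [NormedSpace ℝ E]
    [FiniteDimensional ℝ E] [MeasurableSpace E] [BorelSpace E] (μ : Measure E)
    [μ.IsAddHaarMeasure] {c : ℝ} (hc : c ≠ 0) (s : Set E) (g : E → ℝ≥0∞) :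
    ⨍⁻ x in c • s, g x ∂μ = ⨍⁻ y in s, g (c • y) ∂μ := by
  set C := ENNReal.ofReal |(c ^ Module.finrank ℝ E)⁻¹| with hC
  have hC0 : C ≠ 0 := by simp [hC, hc]
  have hmp : MeasurePreserving (c • · : E → E) μ (C • μ) :=
    ⟨measurable_const_smul c, Measure.map_addHaar_smul μ hc⟩
  have hint (f : E → ℝ≥0∞) : ∫⁻ y in s, f (c • y) ∂μ = C * ∫⁻ x in c • s, f x ∂μ := by
    rw [hmp.setLIntegral_comp_emb (measurableEmbedding_const_smul₀ hc), Measure.restrict_smul,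
      lintegral_smul_measure, image_smul, smul_eq_mul]
  have hvol : μ s = C * μ (c • s) := by simpa using hint 1
  rw [setLAverage_eq, setLAverage_eq, hint, hvol, ENNReal.mul_div_mul_left _ _ hC0 ofReal_ne_top]

section Cubes

variable {n : ℕ}

theorem smul_cube {c : ℝ} (hc : 0 < c) (a : Fin n → ℝ) (l : ℝ) :
    c • Cube n a l = Cube n (c • a) (c * l) := by
  ext x
  simp only [mem_smul_set_iff_inv_smul_mem₀ hc.ne', Cube, mem_univ_pi, mem_Ico, Pi.smul_apply,
    smul_eq_mul, ← mul_add, inv_mul_lt_iff₀ hc, le_inv_mul_iff₀ hc]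

theorem setLAverage_cube_smul {c : ℝ} (hc : 0 < c) (l : ℝ) (g : (Fin n → ℝ) → ℝ≥0∞) :
    ⨍⁻ x in Cube n 0 (c * l), g x ∂volume = ⨍⁻ y in Cube n 0 l, g (c • y) ∂volume := by
  rw [← setLAverage_smul volume hc.ne', smul_cube hc, smul_zero]

theorem mem_cube_zero {l : ℝ} {x : Fin n → ℝ} : x ∈ Cube n 0 l ↔ ∀ i, x i ∈ Ico 0 l := by
  simp [Cube]

theorem cube_zero_subset_cube_zero {l l' : ℝ} (h : l ≤ l') : Cube n 0 l ⊆ Cube n 0 l' :=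
  pi_mono fun _ _ ↦ Ico_subset_Ico_right (by gcongr)

theorem measurableSet_cube (a : Fin n → ℝ) (l : ℝ) : MeasurableSet (Cube n a l) :=
  .univ_pi fun _ ↦ measurableSet_Ico

theorem volume_cube (a : Fin n → ℝ) (l : ℝ) : volume (Cube n a l) = ENNReal.ofReal l ^ n := by
  simp [Cube, volume_pi_pi]

theorem image_add_right_cube (a v : Fin n → ℝ) (l : ℝ) :
    (· + v) '' Cube n a l = Cube n (a + v) l := by
  ext x
  simp only [image_add_right, Cube, mem_preimage, mem_univ_pi, mem_Ico, Pi.add_apply, Pi.neg_apply,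
    ← sub_eq_add_neg (x _), le_sub_iff_add_le, sub_lt_iff_lt_add, add_right_comm]

theorem mem_cube_natCast {d : Fin n → ℕ} {x : Fin n → ℝ} (hx : 0 ≤ x) :
    x ∈ Cube n (fun i ↦ (d i : ℝ)) 1 ↔ (fun i ↦ ⌊x i⌋₊) = d := by
  simp only [Cube, mem_univ_pi, mem_Ico, funext_iff]
  exact forall_congr' fun i ↦ (Nat.floor_eq_iff (hx i)).symm

theorem cube_zero_natCast (L : ℕ) :
    Cube n 0 L = ⋃ d ∈ Fintype.piFinset fun _ : Fin n ↦ Finset.range L,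
      Cube n (fun i ↦ (d i : ℝ)) 1 := by
  ext x
  simp only [mem_iUnion, exists_prop, Fintype.mem_piFinset, Finset.mem_range]
  refine ⟨fun hx ↦ ?_, ?_⟩
  · have hx := mem_cube_zero.1 hx
    exact ⟨fun i ↦ ⌊x i⌋₊, fun i ↦ (Nat.floor_lt (hx i).1).2 (hx i).2,
      (mem_cube_natCast fun i ↦ (hx i).1).2 rfl⟩
  · rintro ⟨d, hd, hx⟩
    refine mem_cube_zero.2 fun i ↦ ?_
    obtain ⟨hdx, hxd⟩ := hx i (mem_univ i)
    have hdL : (d i : ℝ) + 1 ≤ L := mod_cast hd i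
    exact ⟨(Nat.cast_nonneg _).trans hdx, hxd.trans_le hdL⟩

theorem pairwise_disjoint_cube_natCast :
    Pairwise (Function.onFun Disjoint fun d : Fin n → ℕ ↦ Cube n (fun i ↦ (d i : ℝ)) 1) := by
  intro d e hde
  refine disjoint_left.2 fun x hxd hxe ↦ hde ?_
  have hx : 0 ≤ x := fun i ↦ (Nat.cast_nonneg _).trans (hxd i (mem_univ i)).1
  exact ((mem_cube_natCast hx).1 hxd).symm.trans ((mem_cube_natCast hx).1 hxe)

theorem lintegral_cube_natCast (L : ℕ) (g : (Fin n → ℝ) → ℝ≥0∞) :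
    ∫⁻ x in Cube n 0 L, g x = ∑ d ∈ Fintype.piFinset fun _ : Fin n ↦ Finset.range L,
      ∫⁻ y in Cube n 0 1, g (y + fun i ↦ (d i : ℝ)) := by
  rw [cube_zero_natCast, lintegral_biUnion_finset (pairwise_disjoint_cube_natCast.set_pairwise _)
    fun _ _ ↦ measurableSet_cube _ _]
  refine Finset.sum_congr rfl fun d _ ↦ ?_
  rw [(measurePreserving_add_right volume fun i ↦ (d i : ℝ)).setLIntegral_comp_emb
    (measurableEmbedding_addRight _), image_add_right_cube, zero_add]

end Cubes

section Digits

variable {n k : ℕ}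

/-- The contraction `y ↦ 2^{-k} (y + d)` of `ℝ^n`: on `[0,1)^n` it shifts the base-`2^k` digits of
every coordinate by one place and inserts `d i` as the new first digit of the `i`-th one. -/
def prependDigit (k : ℕ) (d : Fin n → ℕ) (y : Fin n → ℝ) : Fin n → ℝ :=
  ((2 : ℝ) ^ k)⁻¹ • (y + fun i ↦ (d i : ℝ))

theorem prependDigit_zero (y : Fin n → ℝ) : prependDigit k 0 y = ((2 : ℝ) ^ k)⁻¹ • y := by
  ext; simp [prependDigit]

theorem setLAverage_cube_eq_sum_prependDigit (k L : ℕ) (g : (Fin n → ℝ) → ℝ≥0∞) :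
    ⨍⁻ x in Cube n 0 ((2 ^ k)⁻¹ * L), g x ∂volume =
      (∑ d ∈ Fintype.piFinset fun _ : Fin n ↦ Finset.range L,
        ∫⁻ y in Cube n 0 1, g (prependDigit k d y)) / (L : ℝ≥0∞) ^ n := by
  rw [setLAverage_cube_smul (by positivity), setLAverage_eq, lintegral_cube_natCast, volume_cube,
    ofReal_natCast]
  rfl

theorem two_pow_mul_lintegral_cube (k : ℕ) (g : (Fin n → ℝ) → ℝ≥0∞) :
    2 ^ (k * n) * ∫⁻ x in Cube n 0 1, g x =
      ∑ d ∈ Fintype.piFinset fun _ : Fin n ↦ Finset.range (2 ^ k),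
        ∫⁻ y in Cube n 0 1, g (prependDigit k d y) := by
  have h := setLAverage_cube_eq_sum_prependDigit k (2 ^ k) g
  rw [Nat.cast_pow, Nat.cast_ofNat, inv_mul_cancel₀ (by positivity), setLAverage_eq, volume_cube,
    ofReal_one, one_pow, div_one, Nat.cast_pow, Nat.cast_ofNat, ← pow_mul] at h
  rw [h, ENNReal.mul_div_cancel (by simp) (by simp)]

theorem prependDigit_mem_cube {d : Fin n → ℕ} (hd : ∀ i, d i < 2 ^ k) {y : Fin n → ℝ}
    (hy : y ∈ Cube n 0 1) : prependDigit k d y ∈ Cube n 0 1 := by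
  refine mem_cube_zero.2 fun i ↦ ?_
  obtain ⟨h0, h1⟩ := mem_cube_zero.1 hy i
  have hd' : (d i : ℝ) + 1 ≤ 2 ^ k := mod_cast hd i
  simp only [prependDigit, Pi.smul_apply, Pi.add_apply, smul_eq_mul]
  refine ⟨by positivity, ?_⟩
  rw [inv_mul_lt_iff₀ (by positivity)]
  linarith

theorem digit_one_prependDigit {d : Fin n → ℕ} {y : Fin n → ℝ} (hy : y ∈ Cube n 0 1) {i : Fin n}
    (hd : d i < 2 ^ k) : digit k 1 (prependDigit k d y i) = d i := by
  have hfloor : ⌊y i⌋ = 0 := Int.floor_eq_zero_iff.2 (mem_cube_zero.1 hy i)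
  simp only [digit, prependDigit, Pi.smul_apply, Pi.add_apply, smul_eq_mul]
  rw [mul_one, mul_comm, mul_inv_cancel_left₀ (by positivity), Int.floor_add_natCast, hfloor,
    zero_add]
  exact Int.emod_eq_of_lt (by positivity) (mod_cast hd)

theorem digit_succ_prependDigit (d : Fin n → ℕ) (y : Fin n → ℝ) (i : Fin n) {j : ℕ} (hj : 1 ≤ j) :
    digit k (j + 1) (prependDigit k d y i) = digit k j (y i) := by
  obtain ⟨j, rfl⟩ := Nat.exists_eq_add_of_le' hj
  have hshift : prependDigit k d y i * 2 ^ (k * (j + 1 + 1)) =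
      y i * 2 ^ (k * (j + 1)) + ((2 ^ k * (2 ^ (k * j) * d i) : ℤ) : ℝ) := by
    simp only [prependDigit, Pi.smul_apply, Pi.add_apply, smul_eq_mul]
    push_cast
    field_simp
    ring
  rw [digit, digit, hshift, Int.floor_add_intCast, Int.add_mul_emod_self_left]

theorem prependDigit_mem_Omega_succ_iff {d : Fin n → ℕ} (hd : ∀ i, d i < 2 ^ (k - 1))
    {y : Fin n → ℝ} (hy : y ∈ Cube n 0 1) {m : ℕ} (hm : 1 ≤ m) :
    prependDigit k d y ∈ Omega n k (m + 1) ↔ y ∈ Omega n k m := by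
  have hd' (i) : d i < 2 ^ k := (hd i).trans_le (Nat.pow_le_pow_right two_pos (k.sub_le 1))
  have hfirst (i) : digit k 1 (prependDigit k d y i) < 2 ^ (k - 1) := by
    rw [digit_one_prependDigit hy (hd' i)]
    exact_mod_cast hd i
  have hx := mem_cube_zero.1 (prependDigit_mem_cube hd' hy)
  simp only [Omega, mem_ofPred_eq, hx, mem_cube_zero.1 hy, implies_true, true_and,
    digit_succ_prependDigit d y _ hm]
  refine forall_congr' fun i ↦ and_congr_left fun _ ↦ ⟨fun h j hj hjm ↦ ?_, fun h j hj hjm ↦ ?_⟩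
  · simpa only [digit_succ_prependDigit d y i hj] using h (j + 1) (by omega) (by omega)
  · obtain rfl | hj1 := hj.eq_or_lt
    · exact hfirst i
    · obtain ⟨j, rfl⟩ := Nat.exists_eq_add_of_le' hj
      rw [digit_succ_prependDigit d y i (by omega)]
      exact h j (by omega) (by omega)

theorem prependDigit_notMem_Omega_one (hn : 1 ≤ n) {d : Fin n → ℕ} (hd : ∀ i, d i < 2 ^ (k - 1))
    {y : Fin n → ℝ} (hy : y ∈ Cube n 0 1) : prependDigit k d y ∉ Omega n k 1 := by
  intro h
  have hfirst := (h.2 ⟨0, hn⟩).2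
  rw [digit_one_prependDigit hy
    ((hd _).trans_le (Nat.pow_le_pow_right two_pos (k.sub_le 1)))] at hfirst
  exact (hd _).ne (mod_cast hfirst)

theorem prependDigit_const_mem_Omega_one (hk : 1 ≤ k) {y : Fin n → ℝ} (hy : y ∈ Cube n 0 1) :
    prependDigit k (fun _ ↦ 2 ^ (k - 1)) y ∈ Omega n k 1 := by
  have hlt : 2 ^ (k - 1) < 2 ^ k := Nat.pow_lt_pow_right one_lt_two (by omega)
  refine ⟨mem_cube_zero.1 (prependDigit_mem_cube (fun _ ↦ hlt) hy), fun i ↦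
    ⟨fun j hj hj' ↦ by omega, ?_⟩⟩
  simp [digit_one_prependDigit (d := fun _ ↦ 2 ^ (k - 1)) hy hlt]

theorem notMem_Omega_of_mem_Omega_one (hn : 1 ≤ n) {x : Fin n → ℝ} (hx : x ∈ Omega n k 1) {m : ℕ}
    (hm : 2 ≤ m) : x ∉ Omega n k m := fun h ↦
  ((h.2 ⟨0, hn⟩).1 1 le_rfl hm).ne (hx.2 ⟨0, hn⟩).2

theorem image_prependDigit_cube (k : ℕ) (d : Fin n → ℕ) :
    prependDigit k d '' Cube n 0 1 =
      Cube n (((2 : ℝ) ^ k)⁻¹ • fun i ↦ (d i : ℝ)) ((2 : ℝ) ^ k)⁻¹ := by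
  have hcomp : prependDigit k d =
      (((2 : ℝ) ^ k)⁻¹ • ·) ∘ ((· + fun i ↦ (d i : ℝ)) : (Fin n → ℝ) → _) := rfl
  rw [hcomp, image_comp, image_add_right_cube, image_smul, smul_cube (by positivity), zero_add,
    mul_one]

theorem Q1_succ (hk : 1 ≤ k) (M : ℕ) :
    Q1 n k (M + 1) =
      ((2 : ℝ) ^ (k * M))⁻¹ • prependDigit k (fun _ ↦ 2 ^ (k - 1)) '' Cube n 0 1 := by
  have hcorner : (2 : ℝ) ^ (-(k * ((M + 1 : ℕ) - 1) : ℤ) - 1) =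
      (2 ^ (k * M))⁻¹ * ((2 ^ k)⁻¹ * 2 ^ (k - 1)) := by
    obtain ⟨k, rfl⟩ := Nat.exists_eq_add_of_le' hk
    rw [Nat.add_sub_cancel, zpow_sub_one₀ two_ne_zero, zpow_neg, ← zpow_natCast _ (_ * M)]
    push_cast
    field_simp
    ring_nf
  have hside : (2 : ℝ) ^ (-(k * (M + 1 : ℕ) : ℤ)) = (2 ^ (k * M))⁻¹ * (2 ^ k)⁻¹ := by
    rw [← mul_inv, ← pow_add, ← mul_add_one, zpow_neg]
    norm_cast
  rw [image_prependDigit_cube, smul_cube (by positivity), Q1, hcorner, hside]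
  congr 1
  ext
  simp

end Digits

section Weight

variable {n k : ℕ}

/-- The ratio `2^{kn} / (2^{(k-1)n} + 1)` whose powers are the values of the weight `w_k`. -/
def wkRatio (n k : ℕ) : ℝ≥0∞ := 2 ^ (k * n) / (2 ^ ((k - 1) * n) + 1)

theorem wkRatio_mul (n k : ℕ) : wkRatio n k * (2 ^ ((k - 1) * n) + 1) = 2 ^ (k * n) :=
  ENNReal.div_mul_cancel (by simp) (by simp)

theorem wkRatio_ne_zero : wkRatio n k ≠ 0 :=
  ENNReal.div_ne_zero.2 ⟨by simp, by simp⟩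

theorem wkRatio_ne_top : wkRatio n k ≠ ∞ :=
  (ENNReal.div_lt_top (by simp) (by simp)).ne

theorem wkRatio_le (hk : 1 ≤ k) : wkRatio n k ≤ 2 ^ n := by
  refine ENNReal.div_le_of_le_mul ?_
  have hexp : k * n = n + (k - 1) * n := by
    obtain ⟨k, rfl⟩ := Nat.exists_eq_add_of_le' hk
    simp only [Nat.add_sub_cancel]
    ring
  rw [hexp, pow_add]
  gcongr
  exact le_self_add

theorem wk_prependDigit (hn : 1 ≤ n) {d : Fin n → ℕ} (hd : ∀ i, d i < 2 ^ (k - 1))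
    {y : Fin n → ℝ} (hy : y ∈ Cube n 0 1) :
    wk n k (prependDigit k d y) = wkRatio n k * wk n k y := by
  classical
  unfold wk
  rw [tsum_eq_zero_add' ENNReal.summable,
    indicator_of_notMem (prependDigit_notMem_Omega_one hn hd hy), zero_add,
    ← ENNReal.tsum_mul_left]
  refine tsum_congr fun m ↦ ?_
  simp only [indicator_apply, prependDigit_mem_Omega_succ_iff hd hy m.succ_pos, mul_ite, mul_zero]
  rw [pow_succ' _ (m + 1), wkRatio]

theorem wk_of_mem_Omega_one (hn : 1 ≤ n) {x : Fin n → ℝ} (hx : x ∈ Omega n k 1) :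
    wk n k x = wkRatio n k := by
  unfold wk
  rw [tsum_eq_single 0 fun m hm ↦
    indicator_of_notMem (notMem_Omega_of_mem_Omega_one hn hx (by omega)) _, indicator_of_mem hx,
    zero_add, pow_one, wkRatio]

theorem wk_inv_two_pow_smul (hn : 1 ≤ n) (M : ℕ) {y : Fin n → ℝ} (hy : y ∈ Cube n 0 1) :
    wk n k (((2 : ℝ) ^ (k * M))⁻¹ • y) = wkRatio n k ^ M * wk n k y := by
  induction M generalizing y with
  | zero => simp
  | succ M ih =>
    have hy' : prependDigit k 0 y ∈ Cube n 0 1 := prependDigit_mem_cube (by simp) hy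
    rw [mul_add_one, pow_add, mul_inv, mul_smul, ← prependDigit_zero (k := k), ih hy',
      wk_prependDigit hn (by simp) hy, pow_succ, mul_assoc]

theorem wk_of_mem_Q1 (hn : 1 ≤ n) (hk : 1 ≤ k) {M : ℕ} {x : Fin n → ℝ}
    (hx : x ∈ Q1 n k (M + 1)) : wk n k x = wkRatio n k ^ (M + 1) := by
  rw [Q1_succ hk] at hx
  obtain ⟨_, ⟨y, hy, rfl⟩, rfl⟩ := hx
  have hΩ := prependDigit_const_mem_Omega_one hk hy
  rw [wk_inv_two_pow_smul hn M (mem_cube_zero.2 hΩ.1), wk_of_mem_Omega_one hn hΩ, pow_succ]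

end Weight

section Averages

variable {n k : ℕ}

theorem lintegral_wk_prependDigit (hn : 1 ≤ n) {d : Fin n → ℕ} (hd : ∀ i, d i < 2 ^ (k - 1)) :
    ∫⁻ y in Cube n 0 1, wk n k (prependDigit k d y) =
      wkRatio n k * ∫⁻ y in Cube n 0 1, wk n k y := by
  rw [← lintegral_const_mul' _ _ wkRatio_ne_top]
  exact setLIntegral_congr_fun (measurableSet_cube _ _) fun y ↦ wk_prependDigit hn hd

theorem lintegral_wk_prependDigit_const (hn : 1 ≤ n) (hk : 1 ≤ k) :
    ∫⁻ y in Cube n 0 1, wk n k (prependDigit k (fun _ ↦ 2 ^ (k - 1)) y) = wkRatio n k := by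
  rw [setLIntegral_congr_fun (measurableSet_cube _ _) fun y hy ↦
    wk_of_mem_Omega_one hn (prependDigit_const_mem_Omega_one hk hy)]
  simp [volume_cube]

theorem setLAverage_wk_cube (hn : 1 ≤ n) {L : ℕ} (hL₀ : L ≠ 0) (hL : L ≤ 2 ^ (k - 1)) :
    ⨍⁻ x in Cube n 0 ((2 ^ k)⁻¹ * L), wk n k x ∂volume =
      wkRatio n k * ∫⁻ y in Cube n 0 1, wk n k y := by
  rw [setLAverage_cube_eq_sum_prependDigit, Finset.sum_congr rfl fun d hd ↦
    lintegral_wk_prependDigit hn fun i ↦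
      (Finset.mem_range.1 (Fintype.mem_piFinset.1 hd i)).trans_le hL,
    Finset.sum_const, Fintype.card_piFinset_const, Finset.card_range, nsmul_eq_mul, Nat.cast_pow,
    mul_comm, ENNReal.mul_div_cancel_right (by simp [hL₀]) (by simp)]

theorem setLAverage_wk_cube_inv_two_pow_mul (hn : 1 ≤ n) (M : ℕ) {l : ℝ} (hl : l ≤ 1) :
    ⨍⁻ x in Cube n 0 ((2 ^ (k * M))⁻¹ * l), wk n k x ∂volume =
      wkRatio n k ^ M * ⨍⁻ y in Cube n 0 l, wk n k y ∂volume := by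
  have hself (y) (hy : y ∈ Cube n 0 l) :
      wk n k (((2 : ℝ) ^ (k * M))⁻¹ • y) = wkRatio n k ^ M * wk n k y :=
    wk_inv_two_pow_smul hn M (cube_zero_subset_cube_zero hl hy)
  rw [setLAverage_cube_smul (by positivity), setLAverage_eq, setLAverage_eq,
    setLIntegral_congr_fun (measurableSet_cube _ _) hself,
    lintegral_const_mul' _ _ (ENNReal.pow_ne_top wkRatio_ne_top), mul_div_assoc]

theorem wkRatio_mul_le_two_pow_mul_lintegral_wk (hn : 1 ≤ n) (hk : 1 ≤ k) :
    wkRatio n k * (2 ^ ((k - 1) * n) * (∫⁻ y in Cube n 0 1, wk n k y) + 1) ≤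
      2 ^ (k * n) * ∫⁻ y in Cube n 0 1, wk n k y := by
  set I := ∫⁻ y in Cube n 0 1, wk n k y
  set D := Fintype.piFinset fun _ : Fin n ↦ Finset.range (2 ^ (k - 1)) with hD
  have hlt : 2 ^ (k - 1) < 2 ^ k := Nat.pow_lt_pow_right one_lt_two (by omega)
  have hnotMem : (fun _ ↦ 2 ^ (k - 1)) ∉ D := fun h ↦ by
    simpa using Fintype.mem_piFinset.1 h ⟨0, hn⟩
  have hsubset : insert (fun _ ↦ 2 ^ (k - 1)) D ⊆
      Fintype.piFinset fun _ : Fin n ↦ Finset.range (2 ^ k) := by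
    refine Finset.insert_subset (by simpa using fun _ ↦ hlt) ?_
    exact Fintype.piFinset_subset _ _ fun _ ↦ Finset.range_subset_range.2 hlt.le
  calc wkRatio n k * (2 ^ ((k - 1) * n) * I + 1)
      = wkRatio n k + ∑ _d ∈ D, wkRatio n k * I := by
        rw [Finset.sum_const, hD, Fintype.card_piFinset_const, Finset.card_range, nsmul_eq_mul]
        push_cast
        ring
    _ = ∑ d ∈ insert (fun _ ↦ 2 ^ (k - 1)) D,
          ∫⁻ y in Cube n 0 1, wk n k (prependDigit k d y) := by
        rw [Finset.sum_insert hnotMem, lintegral_wk_prependDigit_const hn hk]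
        congr 1
        exact Finset.sum_congr rfl fun d hd ↦ (lintegral_wk_prependDigit hn fun i ↦
          Finset.mem_range.1 (Fintype.mem_piFinset.1 hd i)).symm
    _ ≤ ∑ d ∈ Fintype.piFinset fun _ : Fin n ↦ Finset.range (2 ^ k),
          ∫⁻ y in Cube n 0 1, wk n k (prependDigit k d y) :=
        Finset.sum_le_sum_of_subset hsubset
    _ = 2 ^ (k * n) * I := (two_pow_mul_lintegral_cube k _).symm

theorem one_le_lintegral_wk (hn : 1 ≤ n) (hk : 1 ≤ k) :
    1 ≤ ∫⁻ y in Cube n 0 1, wk n k y := by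
  set I := ∫⁻ y in Cube n 0 1, wk n k y
  rcases eq_or_ne I ∞ with hI | hI
  · simp [hI]
  have hle := wkRatio_mul_le_two_pow_mul_lintegral_wk hn hk
  rw [← wkRatio_mul n k, mul_assoc, ENNReal.mul_le_mul_iff_right wkRatio_ne_zero wkRatio_ne_top,
    add_one_mul] at hle
  exact ENNReal.le_of_add_le_add_left (ENNReal.mul_ne_top (by simp) hI) hle

theorem wkRatio_pow_le_setLAverage_wk (hn : 1 ≤ n) {M N : ℕ} (hMN : k * M < N)
    (hNM : N ≤ k * (M + 1)) :
    wkRatio n k ^ (M + 1) ≤ ⨍⁻ x in Cube n 0 (2 ^ N)⁻¹, wk n k x ∂volume := by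
  have hk : 1 ≤ k := by
    by_contra! h
    simp_all
  have hL : 2 ^ (k * (M + 1) - N) ≤ 2 ^ (k - 1) :=
    Nat.pow_le_pow_right two_pos (by rw [mul_add_one]; omega)
  set L := 2 ^ (k * (M + 1) - N)
  have hside : ((2 : ℝ) ^ N)⁻¹ = (2 ^ (k * M))⁻¹ * ((2 ^ k)⁻¹ * L) := by
    have hpow : (2 : ℝ) ^ (k * (M + 1)) = 2 ^ N * L := by
      rw [Nat.cast_pow, Nat.cast_ofNat, ← pow_add, Nat.add_sub_cancel' hNM]
    have hL₀ : (L : ℝ) ≠ 0 := by positivity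
    rw [← mul_assoc, ← mul_inv, ← pow_add, ← mul_add_one, hpow, mul_inv, inv_mul_cancel_right₀ hL₀]
  have hside_le_one : ((2 : ℝ) ^ k)⁻¹ * L ≤ 1 := by
    rw [inv_mul_le_one₀ (by positivity)]
    exact_mod_cast hL.trans (Nat.pow_le_pow_right two_pos (k.sub_le 1))
  calc wkRatio n k ^ (M + 1) = wkRatio n k ^ M * (wkRatio n k * 1) := by rw [mul_one, pow_succ]
    _ ≤ wkRatio n k ^ M * (wkRatio n k * ∫⁻ y in Cube n 0 1, wk n k y) := by
        gcongr
        exact one_le_lintegral_wk hn hk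
    _ = wkRatio n k ^ M * ⨍⁻ y in Cube n 0 ((2 ^ k)⁻¹ * L), wk n k y ∂volume := by
        rw [setLAverage_wk_cube hn (by positivity) hL]
    _ = ⨍⁻ x in Cube n 0 (2 ^ N)⁻¹, wk n k x ∂volume := by
        rw [hside, setLAverage_wk_cube_inv_two_pow_mul hn M hside_le_one]

end Averages

section SparseOperator

variable {n k : ℕ}

theorem sCube_zero (n N : ℕ) : sCube n 0 N = Cube n 0 (2 ^ N)⁻¹ := by
  simp [sCube, Pi.zero_def]

theorem Q1_succ_subset_sCube_zero (hk : 1 ≤ k) {M N : ℕ} (hN : N ≤ k * M) :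
    Q1 n k (M + 1) ⊆ sCube n 0 N := by
  have hdigit : 2 ^ (k - 1) < 2 ^ k := Nat.pow_lt_pow_right one_lt_two (by omega)
  calc Q1 n k (M + 1)
      = ((2 : ℝ) ^ (k * M))⁻¹ • prependDigit k (fun _ ↦ 2 ^ (k - 1)) '' Cube n 0 1 := Q1_succ hk M
    _ ⊆ ((2 : ℝ) ^ (k * M))⁻¹ • Cube n 0 1 :=
        smul_set_mono (image_subset_iff.2 fun _ ↦ prependDigit_mem_cube fun _ ↦ hdigit)
    _ = Cube n 0 (2 ^ (k * M))⁻¹ := by rw [smul_cube (by positivity), smul_zero, mul_one]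
    _ ⊆ Cube n 0 (2 ^ N)⁻¹ :=
        cube_zero_subset_cube_zero (inv_anti₀ (by positivity) (pow_le_pow_right₀ one_le_two hN))
    _ = sCube n 0 N := (sCube_zero n N).symm

theorem sum_setLAverage_le_TS (g : (Fin n → ℝ) → ℝ≥0∞) {x : Fin n → ℝ}
    {s : Finset (ℕ × ℕ)} (hx : ∀ q ∈ s, x ∈ sCube n q.1 q.2) :
    ∑ q ∈ s, ⨍⁻ y in sCube n q.1 q.2, g y ∂volume ≤ TS g x := by
  refine le_of_eq_of_le (Finset.sum_congr rfl fun q hq ↦ ?_) (ENNReal.sum_le_tsum s)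
  rw [indicator_of_mem (hx q hq), setLAverage_eq, ENNReal.div_eq_inv_mul]

theorem natCast_mul_wkRatio_pow_le_TS (hn : 1 ≤ n) (hk : 1 ≤ k) {M : ℕ} {x : Fin n → ℝ}
    (hx : x ∈ Q1 n k (M + 2)) : k * wkRatio n k ^ (M + 1) ≤ TS (wk n k) x := by
  let s : Finset (ℕ × ℕ) := {0} ×ˢ Finset.Ioc (k * M) (k * (M + 1))
  have hs (q) (hq : q ∈ s) : q.1 = 0 ∧ k * M < q.2 ∧ q.2 ≤ k * (M + 1) := by
    simpa only [s, Finset.mem_product, Finset.mem_singleton, Finset.mem_Ioc] using hq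
  calc k * wkRatio n k ^ (M + 1) = ∑ _q ∈ s, wkRatio n k ^ (M + 1) := by simp [s, mul_add_one]
    _ ≤ ∑ q ∈ s, ⨍⁻ y in sCube n q.1 q.2, wk n k y ∂volume := Finset.sum_le_sum fun q hq ↦ by
        obtain ⟨hq₁, hlo, hhi⟩ := hs q hq
        rw [hq₁, sCube_zero]
        exact wkRatio_pow_le_setLAverage_wk hn hlo hhi
    _ ≤ TS (wk n k) x := sum_setLAverage_le_TS _ fun q hq ↦ by
        obtain ⟨hq₁, -, hhi⟩ := hs q hq
        rw [hq₁]
        exact Q1_succ_subset_sCube_zero hk hhi hx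

end SparseOperator

theorem two_pow_le_two_mul_two_pow_sub_one {n : ℕ} (hn : 1 ≤ n) :
    (2 : ℝ≥0∞) ^ n ≤ 2 * (2 ^ n - 1) := by
  have h : 2 ^ n ≤ 2 * (2 ^ n - 1) := by
    have := Nat.pow_le_pow_right two_pos hn
    omega
  exact_mod_cast (Nat.cast_le (α := ℝ≥0∞)).2 h

theorem sparse_wk_pointwise_lower_bound_general (n k : ℕ) (hn : 1 ≤ n) (hk : 1 ≤ k)
    (m : ℕ) (hm : 2 ≤ m) (x : Fin n → ℝ) (hx : x ∈ Q1 n k m) :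
    (k : ℝ≥0∞) / 2 ^ n * wk n k x ≤ TS (wk n k) x := by
  obtain ⟨M, rfl⟩ := Nat.exists_eq_add_of_le' hm
  calc (k : ℝ≥0∞) / 2 ^ n * wk n k x
      = k * wkRatio n k ^ (M + 1) * (wkRatio n k / 2 ^ n) := by
        rw [wk_of_mem_Q1 hn hk hx, pow_succ, div_eq_mul_inv, div_eq_mul_inv]
        ring
    _ ≤ k * wkRatio n k ^ (M + 1) :=
        mul_le_of_le_one_right' (ENNReal.div_le_of_le_mul (by simpa using wkRatio_le hk))
    _ ≤ TS (wk n k) x := natCast_mul_wkRatio_pow_le_TS hn hk hx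

/-- For `n ≥ 1`, `k ≥ 3`, every `m ≥ 3` and every `x ∈ Q_1^m(k)`,
one has `T_S(w_k)(x) ≥ (k / (2(2^n - 1))) · w_k(x)`. -/
theorem sparse_wk_pointwise_lower_bound (n k : ℕ) (hn : 1 ≤ n) (hk : 3 ≤ k)
    (m : ℕ) (hm : 3 ≤ m) (x : Fin n → ℝ) (hx : x ∈ Q1 n k m) :
    (k : ℝ≥0∞) / (2 * ((2:ℝ≥0∞)^n - 1)) * wk n k x ≤ TS (wk n k) x :=
  (mul_le_mul_left (ENNReal.div_le_div_left (two_pow_le_two_mul_two_pow_sub_one hn) _) _).trans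
    (sparse_wk_pointwise_lower_bound_general n k hn (by omega) m (by omega) x hx)
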